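/- arXiv:1301.4578 — 4 statements merged into one kernel-verified Lean document; each statement's English description precedes it below -/
import Mathlib

section
/- Let (X,d) be a generalized cone rectangular metric space with weight s ≥ 1 over a solid cone P in a real Banach space E, let T : X → X, and let φ : P → P be a weak distance altering function. Suppose μ, α, β, γ ≥ 0 are reals with μ + α + β < 1 and φ(d(Tx,Ty)) ≤ μ·φ(d(x,y)) + α·φ(d(x,Tx)) + β·φ(d(y,Ty)) + γ·φ(d(y,Tx)) for all x, y ∈ X. Set δ = (μ + α)/(1 − β). Then for every x ∈ X and every n ∈ ℕ, φ(d(Tⁿx, Tⁿ⁺¹x)) ≤ δⁿ·φ(d(x,Tx)). -/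
open Set Filter

variable {E : Type*} [NormedAddCommGroup E] [NormedSpace ℝ E] [CompleteSpace E]

/-- A cone in a real Banach space: a nonempty closed subset `P` with
`P + P ⊆ P`, `α • P ⊆ P` for all `α ≥ 0`, and `P ∩ (-P) = {0}`. -/
def IsCone (P : Set E) : Prop :=
  P.Nonempty ∧ IsClosed P ∧
  (∀ x ∈ P, ∀ y ∈ P, x + y ∈ P) ∧
  (∀ α : ℝ, 0 ≤ α → ∀ x ∈ P, α • x ∈ P) ∧
  P ∩ (-P) = {0}

/-- The partial order induced by the cone `P` : `x ≤ y` iff `y - x ∈ P`. -/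
def ConeLe (P : Set E) (x y : E) : Prop := y - x ∈ P

/-- `x ≪ y` iff `y - x ∈ int P`. -/
def ConeLt (P : Set E) (x y : E) : Prop := y - x ∈ interior P

/-- A weak distance altering function `φ` for the cone `P`
(given as a self-map of `E` mapping `P` into `P`):
(i) subadditive on `P`, (ii) `φ x ≤ φ y ↔ x ≤ y` on `P`,
(iii) `φ (η • x) ≥ η • φ x` for `0 ≤ η ≤ 1`,
(iv) it preserves the weak convergence to `0` of sequences in `P`. -/
def IsWeakDistanceAltering (P : Set E) (φ : E → E) : Prop :=
  (∀ a ∈ P, φ a ∈ P) ∧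
  (∀ x ∈ P, ∀ y ∈ P, ConeLe P (φ (x + y)) (φ x + φ y)) ∧
  (∀ x ∈ P, ∀ y ∈ P, (ConeLe P (φ x) (φ y) ↔ ConeLe P x y)) ∧
  (∀ x ∈ P, ∀ η : ℝ, 0 ≤ η → η ≤ 1 → ConeLe P (η • φ x) (φ (η • x))) ∧
  (∀ a : ℕ → E, (∀ n, a n ∈ P) →
    (∀ c : E, ConeLt P 0 c → ∃ N : ℕ, ∀ n ≥ N, ConeLt P (a n) c) →
    ∀ c : E, ConeLt P 0 c → ∃ M : ℕ, ∀ n ≥ M, ConeLt P (φ (a n)) c)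

/-- A generalized cone rectangular metric on `X` with weight `s`:
`d x y ∈ P`, `d x y = 0 ↔ x = y`, and the rectangular inequality
`d x y ≤ d x u + s • d u v + d v y` for distinct `u v ∈ X \ {x, y}`. -/
def IsGCRMetric {X : Type*} (P : Set E) (d : X → X → E) (s : ℕ) : Prop :=
  (∀ x y : X, d x y ∈ P) ∧
  (∀ x y : X, d x y = 0 ↔ x = y) ∧
  (∀ x y u v : X, u ≠ v → u ≠ x → u ≠ y → v ≠ x → v ≠ y →
    ConeLe P (d x y) (d x u + (s : ℝ) • d u v + d v y))

/-- A sequence is Cauchy for the generalized cone rectangular metric `d`. -/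
def IsConeCauchy {X : Type*} (P : Set E) (d : X → X → E) (x : ℕ → X) : Prop :=
  ∀ c : E, ConeLt P 0 c → ∃ N : ℕ, ∀ n ≥ N, ∀ k ≥ 1, ConeLt P (d (x n) (x (n + k))) c

/-- A sequence converges weakly to `l`. -/
def ConvergesWeaklyTo {X : Type*} (P : Set E) (d : X → X → E) (x : ℕ → X) (l : X) : Prop :=
  ∀ c : E, ConeLt P 0 c → ∃ N : ℕ, ∀ n ≥ N, ConeLt P (d (x n) l) c

/-- `(X, d)` is weakly complete: every Cauchy sequence converges weakly. -/
def WeaklyComplete {X : Type*} (P : Set E) (d : X → X → E) : Prop :=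
  ∀ x : ℕ → X, IsConeCauchy P d x → ∃ l : X, ConvergesWeaklyTo P d x l

theorem iterate_distance_bound {X : Type*}
    (P : Set E) (hP : IsCone P) (hsolid : (interior P).Nonempty)
    (d : X → X → E) (s : ℕ) (hs : 1 ≤ s) (hd : IsGCRMetric P d s)
    (T : X → X) (φ : E → E) (hφ : IsWeakDistanceAltering P φ)
    (μ α β γ : ℝ) (hμ : 0 ≤ μ) (hα : 0 ≤ α) (hβ : 0 ≤ β) (hγ : 0 ≤ γ)
    (hsum : μ + α + β < 1)
    (hcontr : ∀ x y : X, ConeLe P (φ (d (T x) (T y)))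
      (μ • φ (d x y) + α • φ (d x (T x)) + β • φ (d y (T y)) + γ • φ (d y (T x)))) :
    ∀ x : X, ∀ n : ℕ,
      ConeLe P (φ (d (T^[n] x) (T^[n + 1] x)))
        (((μ + α) / (1 - β)) ^ n • φ (d x (T x))) := by
  obtain ⟨-, hcl, hadd, hsm, hint⟩ := hP
  obtain ⟨hmap, -, -, -, h4⟩ := hφ
  obtain ⟨hdP, hd0, -⟩ := hd
  obtain ⟨c₀, hc₀⟩ := hsolid
  have h0P : (0 : E) ∈ P := by
    have := hsm 0 le_rfl c₀ (interior_subset hc₀)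
    simpa using this
  have hφ0 : φ 0 = 0 := by
    have key : ∀ c : E, ConeLt P 0 c → c - φ 0 ∈ P := by
      intro c hc
      obtain ⟨M, hM⟩ := h4 (fun _ => 0) (fun _ => h0P)
        (fun c hc => ⟨0, fun n _ => hc⟩) c hc
      exact interior_subset (hM M le_rfl)
    have hpos : ∀ t : ℝ, 0 < t → t • c₀ ∈ interior P := by
      intro t ht
      have hopen : IsOpen ((fun x : E => t • x) '' interior P) :=
        isOpenMap_smul₀ ht.ne' _ isOpen_interior
      have hsub : ((fun x : E => t • x) '' interior P) ⊆ P := by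
        rintro _ ⟨x, hx, rfl⟩
        exact hsm t ht.le x (interior_subset hx)
      exact interior_maximal hsub hopen ⟨c₀, hc₀, rfl⟩
    have hlim : Tendsto (fun n : ℕ => (1 / ((n : ℝ) + 1)) • c₀ - φ 0) atTop
        (nhds ((0 : ℝ) • c₀ - φ 0)) :=
      (tendsto_one_div_add_atTop_nhds_zero_nat.smul_const c₀).sub_const _
    have hneg : (0 : ℝ) • c₀ - φ 0 ∈ P := by
      refine hcl.mem_of_tendsto hlim (Eventually.of_forall fun n => ?_)
      apply key
      have := hpos (1 / ((n : ℝ) + 1)) (by positivity)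
      simpa [ConeLt] using this
    have : φ 0 ∈ P ∩ (-P) := ⟨hmap 0 h0P, by simpa using hneg⟩
    rw [hint] at this
    exact this
  have h1β : 0 < 1 - β := by linarith
  have step : ∀ x : X, ((μ + α) / (1 - β)) • φ (d x (T x)) - φ (d (T x) (T (T x))) ∈ P := by
    intro x
    have h := hcontr x (T x)
    rw [(hd0 (T x) (T x)).2 rfl, hφ0] at h
    have h' := hsm (1 - β)⁻¹ (inv_pos.2 h1β).le _ h
    convert h' using 1
    have e : φ (d (T x) (T (T x))) = ((1 - β)⁻¹ * (1 - β)) • φ (d (T x) (T (T x))) := by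
      rw [inv_mul_cancel₀ h1β.ne', one_smul]
    conv_lhs => rw [e]
    rw [div_eq_inv_mul]
    module
  intro x n
  have hδ : 0 ≤ (μ + α) / (1 - β) := div_nonneg (by linarith) h1β.le
  induction n with
  | zero => simpa [ConeLe] using h0P
  | succ n ih =>
    have h1 := step (T^[n] x)
    simp only [← Function.iterate_succ_apply' T] at h1
    have h2 := hadd _ h1 _ (hsm _ hδ _ ih)
    unfold ConeLe
    convert h2 using 1
    rw [pow_succ']
    module
end

section
/- Let (X,d) be a generalized cone rectangular metric space with weight s ≥ 1 over a solid cone P in a real Banach space E, let T : X → X, and let φ : P → P be a weak distance altering function. Suppose μ, α, β, γ ≥ 0 are reals with μ + α + β < 1 and φ(d(Tx,Ty)) ≤ μ·φ(d(x,y)) + α·φ(d(x,Tx)) + β·φ(d(y,Ty)) + γ·φ(d(y,Tx)) for all x, y ∈ X. If for some x ∈ X and natural numbers m > n one has Tᵐx = Tⁿx, then Tⁿx is a fixed point of T. -/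
open Set Filter

variable {E : Type*} [NormedAddCommGroup E] [NormedSpace ℝ E] [CompleteSpace E]

theorem periodic_point_is_fixed {X : Type*}
    (P : Set E) (hP : IsCone P) (hsolid : (interior P).Nonempty)
    (d : X → X → E) (s : ℕ) (hs : 1 ≤ s) (hd : IsGCRMetric P d s)
    (T : X → X) (φ : E → E) (hφ : IsWeakDistanceAltering P φ)
    (μ α β γ : ℝ) (hμ : 0 ≤ μ) (hα : 0 ≤ α) (hβ : 0 ≤ β) (hγ : 0 ≤ γ)
    (hsum : μ + α + β < 1)
    (hcontr : ∀ x y : X, ConeLe P (φ (d (T x) (T y)))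
      (μ • φ (d x y) + α • φ (d x (T x)) + β • φ (d y (T y)) + γ • φ (d y (T x)))) :
    ∀ x : X, ∀ m n : ℕ, m > n → T^[m] x = T^[n] x →
      T (T^[n] x) = T^[n] x := by
  obtain ⟨-, hcl, hadd, hsmul, hpt⟩ := hP
  obtain ⟨hφP, -, hφm, -, hφc⟩ := hφ
  obtain ⟨hdP, hd0, -⟩ := hd
  have anti : ∀ a ∈ P, -a ∈ P → a = 0 := by
    intro a h1 h2
    have : a ∈ P ∩ (-P) := ⟨h1, h2⟩
    rw [hpt] at this
    exact this
  obtain ⟨c, hc⟩ := hsolid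
  have zP : (0 : E) ∈ P := by
    simpa using hsmul 0 le_rfl c (interior_subset hc)
  have hsc : ∀ t : ℝ, 0 < t → t • c ∈ interior P := by
    intro t ht
    have ho : IsOpen ((fun y : E => t • y) '' interior P) :=
      isOpenMap_smul₀ ht.ne' _ isOpen_interior
    refine interior_maximal ?_ ho (Set.mem_image_of_mem _ hc)
    rintro _ ⟨y, hy, rfl⟩
    exact hsmul t ht.le y (interior_subset hy)
  have φ0 : φ 0 = 0 := by
    apply anti _ (hφP 0 zP)
    have key : ∀ k : ℕ, (1 / ((k : ℝ) + 1)) • c - φ 0 ∈ P := by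
      intro k
      obtain ⟨M, hM⟩ := hφc (fun _ => 0) (fun _ => zP)
        (fun c hc => ⟨0, fun _ _ => hc⟩) ((1 / ((k : ℝ) + 1)) • c)
        (by
          unfold ConeLt
          rw [sub_zero]
          exact hsc _ (by positivity))
      exact interior_subset (hM M le_rfl)
    have lim : Tendsto (fun k : ℕ => (1 / ((k : ℝ) + 1)) • c - φ 0) atTop
        (nhds ((0 : ℝ) • c - φ 0)) :=
      (tendsto_one_div_add_atTop_nhds_zero_nat.smul_const c).sub_const _
    have := hcl.mem_of_tendsto lim (Eventually.of_forall key)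
    simpa using this
  intro x m n hmn hT
  have hβ1 : 0 < 1 - β := by linarith
  obtain ⟨L, hL⟩ : ∃ L, L = (μ + α) / (1 - β) := ⟨_, rfl⟩
  have hL0 : 0 ≤ L := by rw [hL]; positivity
  have hL1 : L < 1 := by rw [hL, div_lt_one hβ1]; linarith
  have step : ∀ y, L • φ (d y (T y)) - φ (d (T y) (T (T y))) ∈ P := by
    intro y
    have h := hcontr y (T y)
    unfold ConeLe at h
    rw [(hd0 (T y) (T y)).2 rfl, φ0] at h
    have h2 := hsmul (1 - β)⁻¹ (by positivity) _ h
    convert h2 using 1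
    rw [hL]
    match_scalars <;> field_simp
    ring
  have iter : ∀ k : ℕ, ∀ y, L ^ k • φ (d y (T y)) - φ (d (T^[k] y) (T (T^[k] y))) ∈ P := by
    intro k
    induction k with
    | zero => intro y; simpa using zP
    | succ k ih =>
      intro y
      rw [Function.iterate_succ_apply']
      have h := hadd _ (hsmul L hL0 _ (ih y)) _ (step (T^[k] y))
      convert h using 1
      rw [pow_succ']
      module
  obtain ⟨p, rfl⟩ := Nat.exists_eq_add_of_lt hmn
  have hper : T^[p + 1] (T^[n] x) = T^[n] x := by
    rw [← Function.iterate_add_apply, show p + 1 + n = n + p + 1 by omega]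
    exact hT
  have h := iter (p + 1) (T^[n] x)
  rw [hper] at h
  have hLp : 0 < 1 - L ^ (p + 1) := by
    have := pow_lt_one₀ hL0 hL1 (Nat.succ_ne_zero p)
    simpa using this
  have hz : φ (d (T^[n] x) (T (T^[n] x))) = 0 := by
    apply anti _ (hφP _ (hdP _ _))
    have h2 := hsmul (1 - L ^ (p + 1))⁻¹ (by positivity) _ h
    convert h2 using 1
    match_scalars
    field_simp
    ring
  have h3 := (hφm _ (hdP (T^[n] x) (T (T^[n] x))) 0 zP).1 (by
    unfold ConeLe
    rw [hz, φ0]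
    simpa using zP)
  unfold ConeLe at h3
  rw [zero_sub] at h3
  exact ((hd0 _ _).1 (anti _ (hdP _ _) h3)).symm
end

section
/- Let (X,d) be a generalized cone rectangular metric space with weight s ≥ 1 over a solid cone P in a real Banach space E, let T : X → X, and let φ : P → P be a weak distance altering function. Suppose μ, α, β, γ ≥ 0 are reals with μ + α + β < 1, μ < 1/s and μ + γ < 1, and φ(d(Tx,Ty)) ≤ μ·φ(d(x,y)) + α·φ(d(x,Tx)) + β·φ(d(y,Ty)) + γ·φ(d(y,Tx)) for all x, y ∈ X. Then for every x ∈ X, the sequence of iterates (Tⁿx) is a Cauchy sequence in X. -/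
open Set Filter

variable {E : Type*} [NormedAddCommGroup E] [NormedSpace ℝ E] [CompleteSpace E]

theorem aux_real {X : Type*} (D : X → X → ℝ) (s : ℝ) (hs : 0 ≤ s) (T : X → X)
    (D0 : ∀ x y, 0 ≤ D x y) (D1 : ∀ x, D x x = 0) (D2 : ∀ x y, D x y = 0 → x = y)
    (D3 : ∀ x y u v : X, u ≠ v → u ≠ x → u ≠ y → v ≠ x → v ≠ y →
      D x y ≤ D x u + s * D u v + D v y)
    (μ α β γ : ℝ) (hμ : 0 ≤ μ) (hα : 0 ≤ α) (hβ : 0 ≤ β) (hγ : 0 ≤ γ)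
    (hsum : μ + α + β < 1) (hμγ : μ + γ < 1)
    (hc : ∀ x y : X, D (T x) (T y) ≤
      μ * D x y + α * D x (T x) + β * D y (T y) + γ * D y (T x)) (x₀ : X) (ε : ℝ) (hε : 0 < ε) :
    ∃ N : ℕ, ∀ n ≥ N, ∀ k ≥ 1, D (T^[n] x₀) (T^[n + k] x₀) ≤ ε := by
  obtain ⟨x, hx⟩ : ∃ x : ℕ → X, x = fun n => T^[n] x₀ := ⟨_, rfl⟩
  have hxs : ∀ n, x (n + 1) = T (x n) := by
    intro n; simp only [hx]; exact Function.iterate_succ_apply' T n x₀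
  have hc' : ∀ m n, D (x (m + 1)) (x (n + 1)) ≤ μ * D (x m) (x n) + α * D (x m) (x (m + 1))
      + β * D (x n) (x (n + 1)) + γ * D (x n) (x (m + 1)) := by
    intro m n; simp only [hxs]; exact hc _ _
  suffices H : ∃ N : ℕ, ∀ n ≥ N, ∀ k ≥ 1, D (x n) (x (n + k)) ≤ ε by
    simpa only [hx] using H
  clear hx hc
  obtain ⟨a, ha⟩ : ∃ a : ℕ → ℝ, a = fun n => D (x n) (x (n + 1)) := ⟨_, rfl⟩
  have ha0 : ∀ n, 0 ≤ a n := by intro n; rw [ha]; exact D0 _ _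
  have haD : ∀ n, D (x n) (x (n + 1)) = a n := by intro n; rw [ha]
  obtain ⟨q, hq0, hq1, hq⟩ : ∃ q : ℝ, 0 ≤ q ∧ q < 1 ∧ ∀ n, a (n + 1) ≤ q * a n := by
    have hb : 0 < 1 - β := by linarith
    refine ⟨(μ + α) / (1 - β), by positivity, by rw [div_lt_one hb]; linarith, ?_⟩
    intro n
    have h := hc' n (n + 1)
    rw [D1, haD, haD] at h
    rw [div_mul_eq_mul_div, le_div_iff₀ hb]
    linarith
  have hanti : ∀ n k, a (n + k) ≤ q ^ k * a n := by
    intro n k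
    induction k with
    | zero => simp
    | succ k ih =>
      calc a (n + (k + 1)) ≤ q * a (n + k) := hq _
        _ ≤ q * (q ^ k * a n) := by gcongr
        _ = q ^ (k + 1) * a n := by ring
  have hanti' : ∀ n k, a (n + k) ≤ a n := by
    intro n k
    have h1 : q ^ k ≤ 1 := pow_le_one₀ hq0 hq1.le
    nlinarith [hanti n k, ha0 n]
  by_cases hinj : Function.Injective x
  swap
  · obtain ⟨n, k, hk, hnk⟩ : ∃ n k, 1 ≤ k ∧ x n = x (n + k) := by
      simp only [Function.Injective, not_forall] at hinj
      obtain ⟨i, j, hij, hne⟩ := hinj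
      rcases lt_or_gt_of_ne hne with h | h
      · exact ⟨i, j - i, by omega, by rw [hij]; congr 1; omega⟩
      · exact ⟨j, i - j, by omega, by rw [← hij]; congr 1; omega⟩
    have h1 : a n = a (n + k) := by
      rw [← haD, ← haD, hxs (n + k), hxs n, ← hnk]
    have h2 : a n = 0 := by
      have h3 : q ^ k < 1 := pow_lt_one₀ hq0 hq1 (by omega)
      nlinarith [hanti n k, ha0 n]
    have h4 : ∀ m, x (n + m) = x n := by
      intro m
      have hf : T (x n) = x n := by
        rw [← hxs]; exact (D2 _ _ (by rw [haD, h2])).symm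
      induction m with
      | zero => rfl
      | succ m ih => rw [← add_assoc, hxs, ih, hf]
    refine ⟨n, fun m hm j _ => ?_⟩
    obtain ⟨i, rfl⟩ := Nat.exists_eq_add_of_le hm
    rw [add_assoc, h4, h4, D1]
    exact hε.le
  obtain ⟨r, hr, hr1⟩ : ∃ r, max (μ + γ) q < r ∧ r < 1 := exists_between (max_lt hμγ hq1)
  have hrρ : μ + γ < r := lt_of_le_of_lt (le_max_left _ _) hr
  have hrq : q < r := lt_of_le_of_lt (le_max_right _ _) hr
  have hr0 : 0 < r := lt_of_le_of_lt hq0 hrq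
  have har : ∀ n, a n ≤ r ^ n * a 0 := by
    intro n
    have h := hanti 0 n
    rw [zero_add] at h
    refine h.trans ?_
    have := ha0 0
    gcongr
  obtain ⟨M, hM⟩ : ∃ M : ℕ → ℕ → ℝ,
    M = fun n k => max (D (x (n + k)) (x n)) (D (x n) (x (n + k + 1))) := ⟨_, rfl⟩
  have hMc : ∀ n k, D (x (n + k)) (x n) ≤ M n k := by
    intro n k; rw [hM]; exact le_max_left _ _
  have hMb : ∀ n k, D (x n) (x (n + k + 1)) ≤ M n k := by
    intro n k; rw [hM]; exact le_max_right _ _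
  have hMle : ∀ n k t, D (x (n + k)) (x n) ≤ t → D (x n) (x (n + k + 1)) ≤ t → M n k ≤ t := by
    intro n k t h1 h2; rw [hM]; exact max_le h1 h2
  have hM0 : ∀ n k, 0 ≤ M n k := fun n k => (D0 _ _).trans (hMc n k)
  have hstep : ∀ n k, M (n + 1) k ≤ (μ + γ) * M n k + 2 * a n := by
    intro n k
    have e1 : n + 1 + k = n + k + 1 := by omega
    have h1 := hc' (n + k) n
    have h2 := hc' n (n + k + 1)
    rw [haD, haD] at h1 h2
    have i1 := mul_le_mul_of_nonneg_left (hMc n k) hμ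
    have i2 := mul_le_mul_of_nonneg_left (hMb n k) hγ
    have i3 := mul_le_mul_of_nonneg_left (hMb n k) hμ
    have i4 := mul_le_mul_of_nonneg_left (hanti' n k) hα
    have i5 := mul_le_mul_of_nonneg_left (hanti' n (k + 1)) hβ
    rw [← add_assoc] at i5
    have hab : (α + β) * a n ≤ 1 * a n := mul_le_mul_of_nonneg_right (by linarith) (ha0 n)
    have hC : D (x (n + k + 1)) (x (n + 1)) ≤ (μ + γ) * M n k + a n := by linarith
    have i6 := mul_le_mul_of_nonneg_left hC hγ
    have i7 : γ * ((μ + γ) * M n k) ≤ γ * (1 * M n k) := by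
      have := hM0 n k
      gcongr
    have i8 : γ * a n ≤ 1 * a n := mul_le_mul_of_nonneg_right (by linarith) (ha0 n)
    apply hMle
    · rw [e1]; linarith [ha0 n]
    · rw [e1]; linarith [ha0 n]
  obtain ⟨K, hK0, hK⟩ : ∃ K : ℝ, 0 ≤ K ∧ 2 * a 0 = (r - (μ + γ)) * K := by
    have h : 0 < r - (μ + γ) := by linarith
    have := ha0 0
    exact ⟨2 * a 0 / (r - (μ + γ)), by positivity, by field_simp⟩
  have hgeo : ∀ n k, M n k ≤ r ^ n * (M 0 k + K) := by
    intro n k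
    induction n with
    | zero => simp [hK0]
    | succ n ih =>
      have i1 := mul_le_mul_of_nonneg_left ih (add_nonneg hμ hγ)
      have i2 := har n
      have i3 : r ^ n * (2 * a 0) ≤ r ^ n * ((r - (μ + γ)) * (M 0 k + K)) := by
        rw [hK]
        have := hM0 0 k
        have : 0 ≤ r - (μ + γ) := by linarith
        gcongr
        linarith
      calc M (n + 1) k ≤ (μ + γ) * M n k + 2 * a n := hstep n k
        _ ≤ (μ + γ) * (r ^ n * (M 0 k + K)) + r ^ n * ((r - (μ + γ)) * (M 0 k + K)) := by linarith
        _ = r ^ (n + 1) * (M 0 k + K) := by ring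
  have hgeo' : ∀ n k, M n k ≤ M 0 k + K := by
    intro n k
    refine (hgeo n k).trans ?_
    have h1 : r ^ n ≤ 1 := pow_le_one₀ hr0.le hr1.le
    have h2 : 0 ≤ M 0 k + K := add_nonneg (hM0 _ _) hK0
    nlinarith
  obtain ⟨p, hp⟩ : ∃ p : ℕ, s * r ^ (p + 1) ≤ 1 / 2 := by
    have ht : Tendsto (fun n : ℕ => s * r ^ (n + 1)) atTop (nhds (s * 0)) :=
      ((tendsto_pow_atTop_nhds_zero_of_lt_one hr0.le hr1).comp (tendsto_add_atTop_nat 1)).const_mul s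
    rw [mul_zero] at ht
    exact (ht.eventually (ge_mem_nhds (by norm_num : (0 : ℝ) < 1 / 2))).exists
  have hpM : ∀ k, s * M (p + 1) k ≤ 1 / 2 * (M 0 k + K) := by
    intro k
    have h2 : 0 ≤ M 0 k + K := add_nonneg (hM0 _ _) hK0
    calc s * M (p + 1) k ≤ s * (r ^ (p + 1) * (M 0 k + K)) := by gcongr; exact hgeo _ _
      _ = s * r ^ (p + 1) * (M 0 k + K) := by ring
      _ ≤ _ := by gcongr
  obtain ⟨C, hC⟩ : ∃ C, C = M 0 p + M 0 (p + 1) + 2 * K := ⟨_, rfl⟩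
  have hbd : ∀ k, M 0 k ≤ 2 * C := by
    intro k
    have hCp1 := hM0 0 p
    have hCp2 := hM0 0 (p + 1)
    have hCp3 := hM0 0 k
    suffices h : M 0 k ≤ 1 / 2 * M 0 k + C by linarith
    apply hMle
    · rw [zero_add]
      by_cases hk0 : k = 0
      · subst hk0; rw [D1]; linarith
      by_cases hkp : k = p + 1
      · subst hkp
        have := hMc 0 (p + 1)
        rw [zero_add] at this
        linarith
      have h := D3 (x k) (x 0) (x (p + 1 + k)) (x (p + 1)) (hinj.ne (by omega)) (hinj.ne (by omega))
        (hinj.ne (by omega)) (hinj.ne (by omega)) (hinj.ne (by omega))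
      have h1 := hMb k p
      have h1' := hgeo' k p
      rw [show k + p + 1 = p + 1 + k by omega] at h1
      have h2 := mul_le_mul_of_nonneg_left (hMc (p + 1) k) hs
      have h3 := hMc 0 (p + 1)
      rw [zero_add] at h3
      linarith [hpM k]
    · rw [zero_add]
      by_cases hkp : k = p
      · subst hkp
        have := hMb 0 k
        rw [zero_add] at this
        linarith
      have h := D3 (x 0) (x (k + 1)) (x (p + 1)) (x (p + 1 + k + 1)) (hinj.ne (by omega))
        (hinj.ne (by omega)) (hinj.ne (by omega)) (hinj.ne (by omega)) (hinj.ne (by omega))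
      have h1 := hMb 0 p
      rw [zero_add] at h1
      have h2 := mul_le_mul_of_nonneg_left (hMb (p + 1) k) hs
      have h3 := hMc (k + 1) (p + 1)
      have h3' := hgeo' (k + 1) (p + 1)
      rw [show k + 1 + (p + 1) = p + 1 + k + 1 by omega] at h3
      linarith [hpM k]
  have ht : Tendsto (fun n : ℕ => r ^ n * (2 * C + K)) atTop (nhds (0 * (2 * C + K))) :=
    (tendsto_pow_atTop_nhds_zero_of_lt_one hr0.le hr1).mul_const _
  rw [zero_mul] at ht
  obtain ⟨N, hN⟩ := eventually_atTop.1 (ht.eventually (ge_mem_nhds hε))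
  refine ⟨N, fun n hn k hk => ?_⟩
  obtain ⟨j, rfl⟩ := Nat.exists_eq_add_of_le' hk
  rw [← add_assoc]
  refine (hMb n j).trans ((hgeo n j).trans (le_trans ?_ (hN n hn)))
  gcongr
  exact hbd j

/-- gauge of `v` with respect to `e` -/
noncomputable def coneGauge (P : Set E) (e v : E) : ℝ := sInf {t : ℝ | 0 ≤ t ∧ t • e - v ∈ P}

theorem iterates_cauchy {X : Type*}
    (P : Set E) (hP : IsCone P) (hsolid : (interior P).Nonempty)
    (d : X → X → E) (s : ℕ) (hs : 1 ≤ s) (hd : IsGCRMetric P d s)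
    (T : X → X) (φ : E → E) (hφ : IsWeakDistanceAltering P φ)
    (μ α β γ : ℝ) (hμ : 0 ≤ μ) (hα : 0 ≤ α) (hβ : 0 ≤ β) (hγ : 0 ≤ γ)
    (hsum : μ + α + β < 1) (hμs : μ < 1 / (s : ℝ)) (hμγ : μ + γ < 1)
    (hcontr : ∀ x y : X, ConeLe P (φ (d (T x) (T y)))
      (μ • φ (d x y) + α • φ (d x (T x)) + β • φ (d y (T y)) + γ • φ (d y (T x)))) :
    ∀ x : X, IsConeCauchy P d (fun n => T^[n] x) := by
  intro x c hc
  obtain ⟨-, hcl, hadd, hsm, hpt⟩ := hP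
  obtain ⟨hd0, hd1, hd2⟩ := hd
  obtain ⟨f0, f1, f2, -, f4⟩ := hφ
  simp only [ConeLe, ConeLt, sub_zero] at *
  have hint : ∀ u ∈ interior P, ∀ v ∈ P, u + v ∈ interior P := by
    intro u hu v hv
    have : (fun w => w + v) '' interior P ⊆ interior P := by
      apply interior_maximal
      · rintro _ ⟨w, hw, rfl⟩
        exact hadd _ (interior_subset hw) _ hv
      · exact (Homeomorph.addRight v).isOpenMap _ isOpen_interior
    exact this ⟨u, hu, rfl⟩
  have hsmi : ∀ t : ℝ, 0 < t → ∀ u ∈ interior P, t • u ∈ interior P := by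
    intro t ht u hu
    have : (fun w => t • w) '' interior P ⊆ interior P := by
      apply interior_maximal
      · rintro _ ⟨w, hw, rfl⟩
        exact hsm _ ht.le _ (interior_subset hw)
      · exact (Homeomorph.smulOfNeZero t ht.ne').isOpenMap _ isOpen_interior
    exact this ⟨u, hu, rfl⟩
  have hP0 : (0 : E) ∈ P := by
    have := hsm 0 le_rfl c (interior_subset hc)
    rwa [zero_smul] at this
  have hanti : ∀ u, u ∈ P → -u ∈ P → u = 0 := by
    intro u h1 h2
    have : u ∈ P ∩ (-P) := ⟨h1, h2⟩
    rw [hpt] at this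
    exact this
  -- closedness lemma
  have hlim : ∀ (u v : E) (t : ℝ), (∀ ε : ℝ, 0 < ε → (t + ε) • u - v ∈ P) → t • u - v ∈ P := by
    intro u v t h
    have hcont : Tendsto (fun ε : ℝ => (t + ε) • u - v) (nhdsWithin 0 (Ioi 0))
        (nhds ((t + 0) • u - v)) := by
      apply Tendsto.mono_left _ nhdsWithin_le_nhds
      exact Continuous.tendsto (by fun_prop) 0
    rw [add_zero] at hcont
    exact hcl.mem_of_tendsto hcont (eventually_nhdsWithin_of_forall h)
  have hφ0 : φ 0 = 0 := by
    refine hanti _ (f0 0 hP0) ?_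
    have := hlim c (φ 0) 0 ?_
    · simpa using this
    intro ε hε
    rw [zero_add]
    obtain ⟨M, hM⟩ := f4 (fun _ => 0) (fun _ => hP0) (fun c hc => ⟨0, fun n _ => by simpa using hc⟩)
      (ε • c) (hsmi ε hε c hc)
    exact interior_subset (hM M le_rfl)
  obtain ⟨b, hb⟩ : ∃ b, b = (1 / 2 : ℝ) • c := ⟨_, rfl⟩
  have hbi : b ∈ interior P := by rw [hb]; exact hsmi _ (by norm_num) _ hc
  have hbP := interior_subset hbi
  have hnat : ∀ n : ℕ, ∀ u ∈ P, (n : ℝ) • φ u - φ ((n : ℝ) • u) ∈ P := by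
    intro n u hu
    induction n with
    | zero => simpa [hφ0] using hP0
    | succ n ih =>
      have h1 := f1 ((n : ℝ) • u) (hsm _ (by positivity) _ hu) u hu
      have h2 := hadd _ ih _ h1
      push_cast
      rw [add_smul, add_smul, one_smul, one_smul]
      convert h2 using 1
      abel
  obtain ⟨e, he⟩ : ∃ e, e = φ b := ⟨_, rfl⟩
  have heP : e ∈ P := by rw [he]; exact f0 _ hbP
  have hunit : ∀ u ∈ P, ∃ t : ℝ, 0 ≤ t ∧ t • e - φ u ∈ P := by
    intro u hu
    have h1 : Tendsto (fun n : ℕ => b - (1 / ((n : ℝ) + 1)) • u) atTop (nhds (b - (0 : ℝ) • u)) :=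
      tendsto_const_nhds.sub (tendsto_one_div_add_atTop_nhds_zero_nat.smul_const u)
    rw [zero_smul, sub_zero] at h1
    obtain ⟨n, hn⟩ := (h1.eventually (isOpen_interior.mem_nhds hbi)).exists
    have hn' := hsm ((n : ℝ) + 1) (by positivity) _ (interior_subset hn)
    have hne : ((n : ℝ) + 1) ≠ 0 := by positivity
    rw [smul_sub, smul_smul, mul_one_div_cancel hne, one_smul] at hn'
    have h2 := (f2 u hu (((n : ℝ) + 1) • b) (hsm _ (by positivity) _ hbP)).2 hn'
    have h3 := hnat (n + 1) b hbP
    push_cast at h3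
    refine ⟨(n : ℝ) + 1, by positivity, ?_⟩
    convert hadd _ h2 _ h3 using 1
    rw [he]; abel
  have hmono : ∀ t t' : ℝ, t ≤ t' → ∀ v, t • e - v ∈ P → t' • e - v ∈ P := by
    intro t t' h v hv
    convert hadd _ hv _ (hsm (t' - t) (by linarith) _ heP) using 1
    rw [sub_smul]; abel
  obtain ⟨D, hDdef⟩ : ∃ D : X → X → ℝ, D = fun u v => coneGauge P e (φ (d u v)) := ⟨_, rfl⟩
  have hbdd : ∀ v, BddBelow {t : ℝ | 0 ≤ t ∧ t • e - v ∈ P} := fun v => ⟨0, fun t ht => ht.1⟩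
  have hD0 : ∀ u v, 0 ≤ D u v := by
    intro u v; rw [hDdef]; exact Real.sInf_nonneg (fun t ht => ht.1)
  have hDle : ∀ u v t, 0 ≤ t → t • e - φ (d u v) ∈ P → D u v ≤ t := by
    intro u v t h1 h2; rw [hDdef]; exact csInf_le (hbdd _) ⟨h1, h2⟩
  have hDmem : ∀ u v, D u v • e - φ (d u v) ∈ P := by
    intro u v
    apply hlim
    intro ε hε
    have hne : {t : ℝ | 0 ≤ t ∧ t • e - φ (d u v) ∈ P}.Nonempty := hunit _ (hd0 u v)
    have hlt : sInf {t : ℝ | 0 ≤ t ∧ t • e - φ (d u v) ∈ P} < D u v + ε := by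
      have : D u v = sInf {t : ℝ | 0 ≤ t ∧ t • e - φ (d u v) ∈ P} := by rw [hDdef]; rfl
      rw [← this]; linarith
    obtain ⟨t, ht, ht'⟩ := exists_lt_of_csInf_lt hne hlt
    exact hmono t _ ht'.le _ ht.2
  have key := aux_real D s (by positivity) T hD0 ?_ ?_ ?_ μ α β γ hμ hα hβ hγ hsum hμγ ?_ x 1 one_pos
  · obtain ⟨N, hN⟩ := key
    refine ⟨N, fun n hn k hk => ?_⟩
    have h1 := hmono _ _ (hN n hn k hk) _ (hDmem _ _)
    rw [one_smul, he] at h1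
    have h2 := (f2 _ (hd0 _ _) _ hbP).1 h1
    convert hint _ hbi _ h2 using 1
    have : c = b + b := by rw [hb, ← add_smul]; norm_num
    rw [this]; abel
  · intro u
    refine le_antisymm (hDle _ _ _ le_rfl ?_) (hD0 _ _)
    rw [(hd1 u u).2 rfl, hφ0]
    simpa using hP0
  · intro u v h
    have h1 := hDmem u v
    rw [h, zero_smul, ← hφ0] at h1
    have h2 := (f2 _ (hd0 _ _) _ hP0).1 h1
    rw [zero_sub] at h2
    exact (hd1 u v).1 (hanti _ (hd0 _ _) h2)
  · intro u v w z h1 h2 h3 h4 h5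
    have hsn : (0 : ℝ) ≤ (s : ℝ) := by positivity
    apply hDle
    · have := hD0 u w
      have := hD0 w z
      have := hD0 z v
      positivity
    have p1 := hd0 u w
    have p2 := hsm s hsn _ (hd0 w z)
    have p3 := hd0 z v
    have k0 := (f2 _ (hd0 u v) _ (hadd _ (hadd _ p1 _ p2) _ p3)).2 (hd2 u v w z h1 h2 h3 h4 h5)
    have k1 := f1 _ (hadd _ p1 _ p2) _ p3
    have k2 := f1 _ p1 _ p2
    have k3 := hnat s _ (hd0 w z)
    have k4 := hsm s hsn _ (hDmem w z)
    convert hadd _ (hadd _ (hadd _ (hadd _ k0 _ k1) _ k2) _ k3) _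
      (hadd _ (hadd _ k4 _ (hDmem u w)) _ (hDmem z v)) using 1
    module
  · intro u v
    apply hDle
    · have := hD0 u v
      have := hD0 u (T u)
      have := hD0 v (T v)
      have := hD0 v (T u)
      positivity
    convert hadd _ (hcontr u v) _ (hadd _ (hadd _ (hadd _ (hsm μ hμ _ (hDmem u v)) _
      (hsm α hα _ (hDmem u (T u)))) _ (hsm β hβ _ (hDmem v (T v)))) _
      (hsm γ hγ _ (hDmem v (T u)))) using 1
    module
end

section
/- Let E = ℝ with the solid cone P = [0,∞), and let (X,d) be a weakly complete generalized cone rectangular metric space with weight s ≥ 1 over P (so d is real-valued and nonnegative). Let t be a real number with 0 < t ≤ 1 and let α be a real number with 0 ≤ α < 1/2. If T : X → X satisfies d(Tx,Ty)^t ≤ α·(d(Tx,x)^t + d(Ty,y)^t) for all x, y ∈ X, then T has a unique fixed point. -/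
open Set Filter

variable {E : Type*} [NormedAddCommGroup E] [NormedSpace ℝ E] [CompleteSpace E]

theorem kannan_rpow_fixed_point {X : Type*} [Nonempty X]
    (d : X → X → ℝ) (s : ℕ) (hs : 1 ≤ s)
    (hd : IsGCRMetric (Set.Ici (0 : ℝ)) d s)
    (hcomplete : WeaklyComplete (Set.Ici (0 : ℝ)) d)
    (t : ℝ) (ht0 : 0 < t) (ht1 : t ≤ 1)
    (α : ℝ) (hα0 : 0 ≤ α) (hα1 : α < 1 / 2)
    (T : X → X)
    (hcontr : ∀ x y : X, d (T x) (T y) ^ t ≤ α * (d (T x) x ^ t + d (T y) y ^ t)) :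
    ∃! u : X, T u = u := by
  obtain ⟨hP, h0, hrect⟩ := hd
  have hnn : ∀ x y, 0 ≤ d x y := fun x y => hP x y
  have hlt : ∀ a b : ℝ, ConeLt (Set.Ici (0 : ℝ)) a b ↔ a < b := by
    intro a b
    simp [ConeLt, interior_Ici]
  have hpz : ∀ x y, d x y ^ t = 0 → x = y := by
    intro x y h
    exact (h0 x y).1 ((Real.rpow_eq_zero (hnn x y) ht0.ne').1 h)
  have hpn : ∀ x y, 0 ≤ d x y ^ t := fun x y => Real.rpow_nonneg (hnn x y) t
  have hzero : ∀ u, T u = u → d (T u) u ^ t = 0 := by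
    intro u hu
    rw [(h0 (T u) u).2 hu, Real.zero_rpow ht0.ne']
  have hex : ∃ u, T u = u := by
    by_contra hno
    push Not at hno
    obtain ⟨x0⟩ := ‹Nonempty X›
    obtain ⟨x, hx0, hx⟩ : ∃ x : ℕ → X, x 0 = x0 ∧ ∀ n, x (n + 1) = T (x n) :=
      ⟨fun n => T^[n] x0, rfl, fun n => Function.iterate_succ_apply' T n x0⟩
    obtain ⟨a, ha⟩ : ∃ a : ℕ → ℝ, ∀ n, a n = d (T (x n)) (x n) ^ t := ⟨_, fun _ => rfl⟩
    have hapos : ∀ n, 0 < a n := by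
      intro n
      rw [ha]
      exact lt_of_le_of_ne (hpn _ _) (fun h => hno _ (hpz _ _ h.symm))
    have hcon : ∀ n m, d (x (n + 1)) (x (m + 1)) ^ t ≤ α * (a n + a m) := by
      intro n m
      rw [hx, hx, ha, ha]
      exact hcontr _ _
    have hrec : ∀ n, a (n + 1) ≤ α * (a (n + 1) + a n) := by
      intro n
      have := hcon (n + 1) n
      rw [hx (n + 1)] at this
      rwa [← ha] at this
    have hα' : 0 < 1 - α := by linarith
    have hstep : ∀ n, a (n + 1) ≤ α / (1 - α) * a n := by
      intro n
      rw [div_mul_eq_mul_div, le_div_iff₀ hα']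
      nlinarith [hrec n]
    have hl0 : 0 ≤ α / (1 - α) := div_nonneg hα0 hα'.le
    have hl1 : α / (1 - α) < 1 := by
      rw [div_lt_one hα']; linarith
    have hgeo : ∀ n, a n ≤ (α / (1 - α)) ^ n * a 0 := by
      intro n
      induction n with
      | zero => simp
      | succ k ih =>
        calc a (k + 1) ≤ α / (1 - α) * a k := hstep k
          _ ≤ α / (1 - α) * ((α / (1 - α)) ^ k * a 0) := by gcongr
          _ = _ := by ring
    have hat : Tendsto a atTop (nhds 0) := by
      refine squeeze_zero (fun n => (hapos n).le) hgeo ?_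
      simpa using (tendsto_pow_atTop_nhds_zero_of_lt_one hl0 hl1).mul_const (a 0)
    have hanti : StrictAnti a := by
      refine strictAnti_nat_of_succ_lt (fun n => ?_)
      have h1 := hstep n
      have h2 := mul_lt_mul_of_pos_right hl1 (hapos n)
      linarith
    have hinj : Function.Injective x := by
      intro n m h
      apply hanti.injective
      rw [ha, ha, h]
    have hcau : IsConeCauchy (Set.Ici (0 : ℝ)) d x := by
      intro c hc
      rw [hlt] at hc
      have hct : 0 < c ^ t := Real.rpow_pos_of_pos hc t
      obtain ⟨N, hN⟩ := eventually_atTop.1 (hat.eventually (gt_mem_nhds hct))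
      refine ⟨N + 1, fun n hn k hk => ?_⟩
      rw [hlt]
      obtain ⟨m, rfl⟩ : ∃ m, n = m + 1 := ⟨n - 1, by omega⟩
      rw [← Real.rpow_lt_rpow_iff (hnn _ _) hc.le ht0]
      have h1 := hcon m (m + k)
      rw [show m + 1 + k = m + k + 1 by ring]
      have h2 := hN m (by omega)
      have h3 := hN (m + k) (by omega)
      have h4 : α * (a m + a (m + k)) ≤ α * (c ^ t + c ^ t) := by gcongr
      nlinarith
    obtain ⟨l, hl⟩ := hcomplete x hcau
    have hdl : Tendsto (fun n => d (x n) l) atTop (nhds 0) := by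
      rw [Metric.tendsto_atTop]
      intro c hc
      obtain ⟨N, hN⟩ := hl c ((hlt _ _).2 hc)
      refine ⟨N, fun n hn => ?_⟩
      rw [Real.dist_eq, sub_zero, abs_of_nonneg (hnn _ _)]
      exact (hlt _ _).1 (hN n hn)
    have hel : Tendsto (fun n => d (x n) l ^ t) atTop (nhds 0) := by
      have := hdl.rpow_const (p := t) (Or.inr ht0.le)
      rwa [Real.zero_rpow ht0.ne'] at this
    have hne : ∀ z, ∀ᶠ n in atTop, x n ≠ z := by
      intro z
      by_cases hz : ∃ n, x n = z
      · obtain ⟨n, rfl⟩ := hz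
        filter_upwards [eventually_gt_atTop n] with m hm h
        exact hm.ne' (hinj h)
      · exact Eventually.of_forall (fun n h => hz ⟨n, h⟩)
    have s1 := tendsto_add_atTop_nat 1
    have s2 := tendsto_add_atTop_nat 2
    have hmain : ∀ᶠ n in atTop, d (T l) l ^ t ≤
        α * (d (T l) l ^ t + a n) + (s : ℝ) ^ t * (α * (a n + a (n + 1)))
          + d (x (n + 2)) l ^ t := by
      filter_upwards [s1.eventually (hne l), s1.eventually (hne (T l)),
        s2.eventually (hne l), s2.eventually (hne (T l))] with n e1 e2 e3 e4
      have hr := hrect (T l) l (x (n + 1)) (x (n + 2))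
        (fun h => by have := hinj h; omega) e2 e1 e4 e3
      have hr' : d (T l) l ≤ d (T l) (x (n + 1)) + (s : ℝ) * d (x (n + 1)) (x (n + 2))
          + d (x (n + 2)) l := by
        simpa [ConeLe] using hr
      have p1 := hnn (T l) (x (n + 1))
      have p2 := mul_nonneg (Nat.cast_nonneg (α := ℝ) s) (hnn (x (n + 1)) (x (n + 2)))
      have p3 := hnn (x (n + 2)) l
      have q0 := Real.rpow_le_rpow (hnn _ _) hr' ht0.le
      have q1 := Real.rpow_add_le_add_rpow (add_nonneg p1 p2) p3 ht0.le ht1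
      have q2 := Real.rpow_add_le_add_rpow p1 p2 ht0.le ht1
      rw [Real.mul_rpow (Nat.cast_nonneg s) (hnn _ _)] at q2
      have q3 : d (T l) (x (n + 1)) ^ t ≤ α * (d (T l) l ^ t + a n) := by
        rw [hx, ha]
        exact hcontr _ _
      have q4 := mul_le_mul_of_nonneg_left (hcon n (n + 1))
        (Real.rpow_nonneg (Nat.cast_nonneg (α := ℝ) s) t)
      linarith
    have hlim : Tendsto (fun n => α * (d (T l) l ^ t + a n)
        + (s : ℝ) ^ t * (α * (a n + a (n + 1))) + d (x (n + 2)) l ^ t) atTop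
        (nhds (α * (d (T l) l ^ t + 0) + (s : ℝ) ^ t * (α * (0 + 0)) + 0)) :=
      (((hat.const_add _).const_mul _).add
        (((hat.add (hat.comp s1)).const_mul _).const_mul _)).add (hel.comp s2)
    have hfin := ge_of_tendsto hlim hmain
    have hq := hpn (T l) l
    exact hno l (hpz _ _ (by nlinarith))
  obtain ⟨u, hu⟩ := hex
  refine ⟨u, hu, fun v hv => ?_⟩
  have h := hcontr v u
  rw [hzero v hv, hzero u hu, hv, hu] at h
  exact hpz _ _ (le_antisymm (by linarith) (hpn _ _))
end
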